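/- arXiv:0712.1725 — 4 statements merged into one kernel-verified Lean document; each statement's English description precedes it below -/
import Mathlib

section
/- Let Φ be a reduced crystallographic root system in a finite-dimensional vector space over a field of characteristic zero, Δ a base of Φ, and γ an automorphism of Φ which maps Δ onto Δ. Let α ∈ Φ and let l be the cardinality of the γ-orbit (α) = {γ^i(α) : i ∈ ℤ}. Then one of the following two cases occurs: (i) any two distinct roots in (α) are orthogonal, i.e. ⟨γ^i α, (γ^j α)^∨⟩ = 0 whenever γ^i α ≠ γ^j α; or (ii) l is even and, for all 0 ≤ i < j < l, the pairing ⟨γ^i α, (γ^j α)^∨⟩ equals −1 if j − i = l/2 and equals 0 otherwise — in particular ⟨α, (γ^{l/2} α)^∨⟩ = −1, so that the roots of (α) generate a subsystem of type A₂^{l/2}. -/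
/-! The linear functional `h` equal to `1` on `Δ` is nonzero on every root and `γ`-invariant. If two
distinct roots of the orbit had positive pairing, their difference would be a root on which `h`
vanishes; so off-diagonal pairings within the orbit are nonpositive integers. The sum of the orbit
is nonzero because `h` does not vanish on it, so its pairing with some coroot of the orbit is
positive, by positivity of the canonical form, and then with every such coroot by symmetry. As the
diagonal contributes `2`, each root has at most one non-orthogonal partner in the orbit, with
pairing `-1`. If `γ ^ m` sends `α` to its partner, then so does `γ ^ (-m)`; hence `γ ^ (2 * m)`
fixes `α` while `γ ^ m` does not, which forces `m ≡ l / 2` modulo `l`. -/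

open Equiv Module Set

section Cycle

variable {ι : Type*} {σ : Perm ι} {s : Finset ι}

theorem apply_zpow_zpow_eq {X : Type*} {f : ι → ι → X} (hf : ∀ i j, f (σ i) (σ j) = f i j)
    (n : ℤ) (i j : ι) : f ((σ ^ n) i) ((σ ^ n) j) = f i j := by
  induction n using Int.induction_on generalizing i j with
  | zero => rfl
  | succ n ih => rw [zpow_add_one, Perm.mul_apply, Perm.mul_apply, ih, hf]
  | pred n ih =>
    rw [zpow_sub_one, Perm.mul_apply, Perm.mul_apply, ih, ← hf, ← Perm.mul_apply,
      ← Perm.mul_apply, mul_inv_cancel, Perm.one_apply, Perm.one_apply]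

theorem isCycleOn_range_zpow (σ : Perm ι) (i : ι) :
    σ.IsCycleOn (range fun n : ℤ ↦ (σ ^ n) i) := by
  refine ⟨⟨?_, σ.injective.injOn, ?_⟩, ?_⟩
  · rintro _ ⟨n, rfl⟩
    exact ⟨1 + n, by simp only [zpow_one_add, Perm.mul_apply]⟩
  · rintro _ ⟨n, rfl⟩
    exact ⟨_, ⟨n - 1, rfl⟩, by rw [← Perm.mul_apply, mul_self_zpow, sub_add_cancel]⟩
  · rintro _ ⟨m, rfl⟩ _ ⟨n, rfl⟩
    exact Perm.sameCycle_zpow_left.2 (Perm.sameCycle_zpow_right.2 Perm.SameCycle.rfl)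

theorem exists_finset_isCycleOn [Finite ι] (σ : Perm ι) (i : ι) :
    ∃ s : Finset ι, i ∈ s ∧ σ.IsCycleOn s ∧ s.card = Nat.card (range fun n : ℤ ↦ (σ ^ n) i) := by
  refine ⟨(toFinite (range fun n : ℤ ↦ (σ ^ n) i)).toFinset, ?_, ?_, ?_⟩
  · exact (Finite.mem_toFinset _).2 ⟨0, rfl⟩
  · rw [Finite.coe_toFinset]
    exact isCycleOn_range_zpow σ i
  · exact (Nat.card_eq_card_finite_toFinset _).symm

theorem even_card_and_zpow_apply_eq_iff (hs : σ.IsCycleOn s) {i : ι} (hi : i ∈ s) {m : ℤ}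
    (hm : (σ ^ m) i ≠ i) (hneg : (σ ^ (-m)) i = (σ ^ m) i) :
    Even s.card ∧ ∀ n : ℤ, (σ ^ n) i = (σ ^ m) i ↔ n ≡ s.card / 2 [ZMOD s.card] := by
  rw [Ne, hs.zpow_apply_eq hi] at hm
  rw [hs.zpow_apply_eq_zpow_apply hi, Int.modEq_iff_dvd] at hneg
  obtain ⟨t, ht⟩ := hneg
  obtain ⟨r, rfl⟩ | ⟨r, rfl⟩ := t.even_or_odd
  · exact absurd ⟨r, by linarith⟩ hm
  have heven : Even (s.card : ℤ) := ⟨m - s.card * r, by linarith⟩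
  have hhalf : m = s.card / 2 + s.card * r := by grind
  refine ⟨by exact_mod_cast heven, fun n ↦ ?_⟩
  rw [hs.zpow_apply_eq_zpow_apply hi, hhalf, Int.modEq_add_modulus_mul_iff]

theorem exists_perm_coe_zpow {R M : Type*} [Semiring R] [AddCommMonoid M] [Module R M] {Φ : Set M}
    (γ : M ≃ₗ[R] M) (hγΦ : γ '' Φ = Φ) :
    ∃ σ : Perm Φ, ∀ (n : ℤ) (β : Φ), ((σ ^ n) β : M) = (γ ^ n) β := by
  have hmem (x : M) : γ.toEquiv x ∈ Φ ↔ x ∈ Φ := by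
    conv_lhs => rw [← hγΦ]
    exact γ.injective.mem_set_image
  refine ⟨Perm.subtypePerm γ.toEquiv hmem, fun n β ↦ ?_⟩
  rw [Perm.subtypePerm_zpow]
  exact DFunLike.congr_fun (map_zpow (MulAction.toPermHom (M ≃ₗ[R] M) M) γ n).symm (β : M)

end Cycle

theorem natCast_sub_natCast_modEq_half_iff {l m n : ℕ} (hl : Even l) (hmn : m < n) (hn : n < l) :
    (m - n : ℤ) ≡ l / 2 [ZMOD l] ↔ n - m = l / 2 := by
  obtain ⟨r, rfl⟩ := hl
  rw [Int.ModEq, ← Int.add_emod_right, Int.emod_eq_of_lt, Int.emod_eq_of_lt]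
  all_goals omega

theorem eq_neg_one_and_eq_zero_of_neg_one_le_sum {ι : Type*} {s : Finset ι} {a : ι → ℤ}
    (ha : ∀ i ∈ s, a i ≤ 0) (hsum : -1 ≤ ∑ i ∈ s, a i) {j : ι} (hj : j ∈ s) (haj : a j ≠ 0) :
    a j = -1 ∧ ∀ i ∈ s, i ≠ j → a i = 0 := by
  classical
  have hrest : ∀ i ∈ s.erase j, a i ≤ 0 := fun i hi ↦ ha i (Finset.mem_of_mem_erase hi)
  have hsplit := Finset.add_sum_erase s a hj
  have hrest_sum := Finset.sum_nonpos hrest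
  have haj_nonpos := ha j hj
  refine ⟨by omega, fun i hi hij ↦ ?_⟩
  exact (Finset.sum_eq_zero_iff_of_nonpos hrest).1 (by omega) i (Finset.mem_erase.2 ⟨hij, hi⟩)

theorem sum_ne_zero_of_apply_eq {ι R M : Type*} [Semiring R] [NoZeroDivisors R] [CharZero R]
    [AddCommMonoid M] [Module R M] {h : Dual R M} {v : ι → M} {c : R} (hc : c ≠ 0)
    {s : Finset ι} (hs : s.Nonempty) (hv : ∀ i ∈ s, h (v i) = c) : ∑ i ∈ s, v i ≠ 0 := by
  intro hsum
  have hcard : s.card * c = 0 := by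
    rw [← nsmul_eq_mul, ← Finset.sum_const, ← Finset.sum_congr rfl hv, ← map_sum, hsum, map_zero]
  exact mul_ne_zero (Nat.cast_ne_zero.2 hs.card_ne_zero) hc hcard

theorem sum_support_ne_zero {ι : Type*} {c : ι →₀ ℤ} (hc : c ≠ 0)
    (hsign : (∀ i, 0 ≤ c i) ∨ (∀ i, c i ≤ 0)) : ∑ i ∈ c.support, c i ≠ 0 := by
  obtain ⟨i, hi⟩ := Finsupp.support_nonempty_iff.2 hc
  intro hsum
  refine Finsupp.mem_support_iff.1 hi ?_
  obtain hpos | hneg := hsign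
  · exact (Finset.sum_eq_zero_iff_of_nonneg fun i _ ↦ hpos i).1 hsum i hi
  · exact (Finset.sum_eq_zero_iff_of_nonpos fun i _ ↦ hneg i).1 hsum i hi

theorem apply_sum_intCast_smul_eq {R M : Type*} [Ring R] [AddCommGroup M] [Module R M]
    {Δ : Set M} {h : Dual R M} (hΔ : ∀ δ ∈ Δ, h δ = 1) {c : M →₀ ℤ}
    (hc : (c.support : Set M) ⊆ Δ) :
    h (c.sum fun δ z ↦ (z : R) • δ) = ((∑ δ ∈ c.support, c δ : ℤ) : R) := by
  rw [Finsupp.sum, map_sum, Int.cast_sum]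
  exact Finset.sum_congr rfl fun δ hδ ↦ by rw [map_smul, hΔ δ (hc hδ), smul_eq_mul, mul_one]

section RootPairing

variable {ι R M N : Type*} [Finite ι] [CommRing R] [IsDomain R] [AddCommGroup M] [Module R M]
  [AddCommGroup N] [Module R N]

theorem exists_sum_pairingIn_pos (P : RootPairing ι R M N) (S : Type*) [CommRing S]
    [LinearOrder S] [IsStrictOrderedRing S] [Algebra S R] [FaithfulSMul S R] [P.IsValuedIn S]
    [Module S M] [IsScalarTower S R M] [Module S N] [IsScalarTower S R N]
    {s : Finset ι} (hs : ∑ i ∈ s, P.root i ≠ 0) :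
    ∃ j ∈ s, 0 < ∑ i ∈ s, P.pairingIn S i j := by
  have := Fintype.ofFinite ι
  let B := P.posRootForm S
  let v : P.rootSpan S := ∑ i ∈ s, P.rootSpanMem S i
  have hv : v ≠ 0 := fun h ↦ hs <| by simpa [v] using congrArg Subtype.val h
  have hpos : 0 < ∑ j ∈ s, B.posForm v (P.rootSpanMem S j) := by
    simpa only [← map_sum] using P.posRootForm_posForm_pos_of_ne_zero S hv
  have htwo (j : ι) : 2 * B.posForm v (P.rootSpanMem S j) =
      (∑ i ∈ s, P.pairingIn S i j) * B.rootLength j := by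
    apply FaithfulSMul.algebraMap_injective S R
    simp [v, Finset.mul_sum, Finset.sum_mul, ← B.two_mul_apply_root_root, map_ofNat]
  contrapose! hpos
  refine Finset.sum_nonpos fun j hj ↦ ?_
  have := mul_nonpos_of_nonpos_of_nonneg (hpos j hj) (B.rootLength_pos j).le
  linarith [htwo j]

variable [CharZero R] {P : RootPairing ι R M N} [P.IsCrystallographic]

theorem pairingIn_nonpos_of_apply_root_eq {h : Dual R M} (hP : ∀ i, h (P.root i) ≠ 0) {i j : ι}
    (hij : i ≠ j) (heq : h (P.root i) = h (P.root j)) : P.pairingIn ℤ i j ≤ 0 := by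
  by_contra! hpos
  obtain ⟨m, hm⟩ := P.root_sub_root_mem_of_pairingIn_pos hpos hij
  exact hP m (by rw [hm, map_sub, heq, sub_self])

section Perm

variable {σ : Perm ι} {s : Finset ι}

theorem sum_pairingIn_pos_of_isCycleOn
    (hσ : ∀ i j, P.pairingIn ℤ (σ i) (σ j) = P.pairingIn ℤ i j)
    (hs : σ.IsCycleOn s) (hsum : ∑ i ∈ s, P.root i ≠ 0) {j : ι} (hj : j ∈ s) :
    0 < ∑ i ∈ s, P.pairingIn ℤ i j := by
  obtain ⟨m, hm, hpos⟩ := exists_sum_pairingIn_pos P ℤ hsum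
  obtain ⟨n, rfl⟩ := hs.2 hj hm
  have hbij := hs.1.perm_zpow n
  have hshift : ∑ i ∈ s, P.pairingIn ℤ i j = ∑ i ∈ s, P.pairingIn ℤ i ((σ ^ n) j) :=
    Finset.sum_nbij ⇑(σ ^ n) hbij.mapsTo hbij.injOn hbij.surjOn
      fun i _ ↦ (apply_zpow_zpow_eq (f := P.pairingIn ℤ) hσ n i j).symm
  rwa [hshift]

variable {h : Dual R M} (hP : ∀ i, h (P.root i) ≠ 0)
  (hσ : ∀ i j, P.pairingIn ℤ (σ i) (σ j) = P.pairingIn ℤ i j)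
  (hσh : ∀ i, h (P.root (σ i)) = h (P.root i)) (hs : σ.IsCycleOn s)

include hP hσ hσh hs

theorem pairingIn_eq_neg_one_and_eq_zero_of_isCycleOn {i j : ι} (hi : i ∈ s) (hj : j ∈ s)
    (hij : i ≠ j) (hpair : P.pairingIn ℤ i j ≠ 0) :
    P.pairingIn ℤ i j = -1 ∧ ∀ m ∈ s, m ≠ j → m ≠ i → P.pairingIn ℤ m j = 0 := by
  classical
  have hconst : ∀ m ∈ s, h (P.root m) = h (P.root j) := by
    intro m hm
    obtain ⟨n, rfl⟩ := hs.2 hj hm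
    exact apply_zpow_zpow_eq (f := fun i _ ↦ h (P.root i)) (fun i _ ↦ hσh i) n j j
  have hnonpos : ∀ m ∈ s.erase j, P.pairingIn ℤ m j ≤ 0 := fun m hm ↦
    pairingIn_nonpos_of_apply_root_eq hP (Finset.ne_of_mem_erase hm)
      (hconst m (Finset.mem_of_mem_erase hm))
  have hpos := sum_pairingIn_pos_of_isCycleOn hσ hs
    (sum_ne_zero_of_apply_eq (hP j) ⟨j, hj⟩ hconst) hj
  rw [← Finset.add_sum_erase s _ hj, P.pairingIn_same] at hpos
  obtain ⟨hval, hzero⟩ := eq_neg_one_and_eq_zero_of_neg_one_le_sum hnonpos (by linarith)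
    (Finset.mem_erase.2 ⟨hij, hi⟩) hpair
  exact ⟨hval, fun m hm hmj ↦ hzero m (Finset.mem_erase.2 ⟨hmj, hm⟩)⟩

theorem even_card_and_pairingIn_zpow_eq_ite {i : ι} (hi : i ∈ s) {m : ℤ}
    (hm : (σ ^ m) i ≠ i) (hpair : P.pairingIn ℤ ((σ ^ m) i) i ≠ 0) :
    Even s.card ∧ ∀ n : ℤ, (σ ^ n) i ≠ i →
      P.pairingIn ℤ ((σ ^ n) i) i = if n ≡ s.card / 2 [ZMOD s.card] then -1 else 0 := by
  have : IsReflexive R M := .of_isPerfPair P.toLinearMap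
  have hmem (n : ℤ) : (σ ^ n) i ∈ s := (hs.1.perm_zpow n).mapsTo hi
  have hinv : σ ^ m * σ ^ (-m) = 1 := by rw [← zpow_add, add_neg_cancel, zpow_zero]
  obtain ⟨hval, hzero⟩ :=
    pairingIn_eq_neg_one_and_eq_zero_of_isCycleOn hP hσ hσh hs (hmem m) hi hm hpair
  have hpair_neg : P.pairingIn ℤ ((σ ^ (-m)) i) i ≠ 0 := by
    rw [← apply_zpow_zpow_eq hσ m, ← Perm.mul_apply, hinv, Perm.one_apply]
    exact P.pairingIn_eq_zero_iff.not.1 hpair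
  have hm_neg : (σ ^ (-m)) i ≠ i := by
    intro h
    apply hm
    nth_rw 1 [← h]
    rw [← Perm.mul_apply, hinv, Perm.one_apply]
  have hneg : (σ ^ (-m)) i = (σ ^ m) i := by
    by_contra hne
    exact hpair_neg (hzero _ (hmem _) hm_neg hne)
  obtain ⟨heven, hiff⟩ := even_card_and_zpow_apply_eq_iff hs hi hm hneg
  refine ⟨heven, fun n hn ↦ ?_⟩
  split_ifs with hmod
  · rw [(hiff n).2 hmod, hval]
  · exact hzero _ (hmem n) hn (mt (hiff n).1 hmod)

theorem pairingIn_zpow_eq_zero_or_even_card {i : ι} (hi : i ∈ s) :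
    (∀ m n : ℤ, (σ ^ m) i ≠ (σ ^ n) i → P.pairingIn ℤ ((σ ^ m) i) ((σ ^ n) i) = 0) ∨
    (Even s.card ∧ ∀ m n : ℕ, m < n → n < s.card →
      P.pairingIn ℤ ((σ ^ m) i) ((σ ^ n) i) = if n - m = s.card / 2 then -1 else 0) := by
  have hshift (m n : ℤ) :
      P.pairingIn ℤ ((σ ^ m) i) ((σ ^ n) i) = P.pairingIn ℤ ((σ ^ (m - n)) i) i := by
    rw [← apply_zpow_zpow_eq hσ n ((σ ^ (m - n)) i), ← Perm.mul_apply, ← zpow_add,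
      add_sub_cancel]
  have hcongr (m n : ℤ) : (σ ^ (m - n)) i = i ↔ (σ ^ m) i = (σ ^ n) i := by
    rw [hs.zpow_apply_eq hi, hs.zpow_apply_eq_zpow_apply hi, Int.modEq_comm, Int.modEq_iff_dvd]
  by_cases hex : ∃ m : ℤ, (σ ^ m) i ≠ i ∧ P.pairingIn ℤ ((σ ^ m) i) i ≠ 0
  · obtain ⟨m₀, hm₀, hpair⟩ := hex
    obtain ⟨heven, hval⟩ := even_card_and_pairingIn_zpow_eq_ite hP hσ hσh hs hi hm₀ hpair
    refine .inr ⟨heven, fun m n hmn hn ↦ ?_⟩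
    have hne : (σ ^ (m - n : ℤ)) i ≠ i := by
      rw [Ne, hs.zpow_apply_eq hi]
      exact fun hdvd ↦ by have := Int.eq_zero_of_abs_lt_dvd hdvd (by grind); omega
    rw [← zpow_natCast, ← zpow_natCast, hshift, hval _ hne,
      if_congr (natCast_sub_natCast_modEq_half_iff heven hmn hn) rfl rfl]
  · push Not at hex
    exact .inl fun m n hmn ↦ (hshift m n).trans (hex _ (mt (hcongr m n).1 hmn))

end Perm

end RootPairing

section Realization

variable {k V : Type*} [Field k] [CharZero k] [AddCommGroup V] [Module k V] {Φ : Set V}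

theorem exists_rootPairing_span (hfin : Φ.Finite) (coroot : V → Dual k V)
    (hself : ∀ α ∈ Φ, coroot α α = 2)
    (hrefl : ∀ α ∈ Φ, ∀ β ∈ Φ, β - coroot α β • α ∈ Φ) :
    ∃ P : RootPairing Φ k (Submodule.span k Φ) (Dual k (Submodule.span k Φ)),
      (∀ α, (P.root α : V) = α) ∧ ∀ α β, P.pairing α β = coroot β α := by
  have := hfin.to_subtype
  have : FiniteDimensional k (Submodule.span k Φ) := .span_of_finite k hfin
  let root : Φ ↪ Submodule.span k Φ :=
    ⟨inclusion Submodule.subset_span, inclusion_injective _⟩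
  have hrange : range root = (↑) ⁻¹' Φ := by
    ext v
    exact ⟨by rintro ⟨α, rfl⟩; exact α.2, fun hv ↦ ⟨⟨v, hv⟩, rfl⟩⟩
  have : IsAddTorsionFree (Submodule.span k Φ) := .of_isTorsionFree k _
  let c (α : Φ) : Dual k (Submodule.span k Φ) := (coroot α).domRestrict _
  have hc (α : Φ) : c α (root α) = 2 := hself α α.2
  have hmaps (α : Φ) : MapsTo (preReflection (root α) (c α)) (range root) (range root) := by
    rw [hrange]
    exact fun v hv ↦ hrefl α α.2 v hv
  have hinj : Function.Injective c := fun α β hαβ ↦ root.injective <|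
    eq_of_mapsTo_reflection_of_mem (finite_range root) (hc α) (hc β) (hαβ ▸ hc α) (hαβ ▸ hc β)
      (hmaps α) (hmaps β) (mem_range_self β)
  refine ⟨RootPairing.mk'' (Dual.eval k _) root ⟨c, hinj⟩ hc hmaps ?_, fun _ ↦ rfl, fun _ _ ↦ rfl⟩
  rw [hrange]
  exact Submodule.span_span_coe_preimage

theorem exists_isCrystallographic_rootPairing_span (hfin : Φ.Finite) (coroot : V → Dual k V)
    (hself : ∀ α ∈ Φ, coroot α α = 2)
    (hrefl : ∀ α ∈ Φ, ∀ β ∈ Φ, β - coroot α β • α ∈ Φ)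
    (hcrys : ∀ α ∈ Φ, ∀ β ∈ Φ, ∃ z : ℤ, coroot α β = z) :
    ∃ (P : RootPairing Φ k (Submodule.span k Φ) (Dual k (Submodule.span k Φ)))
      (_ : P.IsCrystallographic),
      (∀ α, (P.root α : V) = α) ∧ ∀ α β, (P.pairingIn ℤ α β : k) = coroot β α := by
  obtain ⟨P, hroot, hpairing⟩ := exists_rootPairing_span hfin coroot hself hrefl
  have hP : P.IsCrystallographic := ⟨fun α β ↦ by
    obtain ⟨z, hz⟩ := hcrys β β.2 α α.2
    exact ⟨z, (hpairing α β ▸ hz).symm⟩⟩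
  exact ⟨P, hP, hroot, fun α β ↦ (P.algebraMap_pairingIn ℤ α β).trans (hpairing α β)⟩

theorem exists_dual_apply_eq_and_ne_zero (h0 : (0 : V) ∉ Φ) {Δ : Set V}
    (hΔli : LinearIndependent k (fun δ : Δ ↦ (δ : V)))
    (hbase : ∀ β ∈ Φ, ∃ c : V →₀ ℤ, (c.support : Set V) ⊆ Δ ∧
      β = c.sum (fun δ z ↦ (z : k) • δ) ∧ ((∀ δ, 0 ≤ c δ) ∨ (∀ δ, c δ ≤ 0)))
    {γ : V →ₗ[k] V} (hγΔ : MapsTo γ Δ Δ) :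
    ∃ h : Dual k V, ∀ β ∈ Φ, h (γ β) = h β ∧ h β ≠ 0 := by
  obtain ⟨h, hΔ⟩ := exists_dual_forall_apply_eq_one (v := id) (s := Δ) hΔli
  refine ⟨h, fun β hβ ↦ ?_⟩
  obtain ⟨c, hc, rfl, hsign⟩ := hbase β hβ
  have hc0 : c ≠ 0 := by
    rintro rfl
    exact h0 (by simpa using hβ)
  have hγh : ∀ δ ∈ Δ, (h ∘ₗ γ) δ = 1 := fun δ hδ ↦ hΔ _ (hγΔ hδ)
  rw [← LinearMap.comp_apply, apply_sum_intCast_smul_eq hγh hc, apply_sum_intCast_smul_eq hΔ hc]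
  exact ⟨rfl, Int.cast_ne_zero.2 (sum_support_ne_zero hc0 hsign)⟩

end Realization

theorem stmt2_general {k V : Type*} [Field k] [CharZero k] [AddCommGroup V] [Module k V]
    (Φ : Set V) (hfin : Φ.Finite)
    (coroot : V → (V →ₗ[k] k))
    (hself : ∀ α ∈ Φ, coroot α α = 2)
    (hrefl : ∀ α ∈ Φ, ∀ β ∈ Φ, β - coroot α β • α ∈ Φ)
    (hcrys : ∀ α ∈ Φ, ∀ β ∈ Φ, ∃ z : ℤ, coroot α β = (z : k))
    (Δ : Set V)
    (hΔli : LinearIndependent k (fun δ : Δ => (δ : V)))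
    (hbase : ∀ β ∈ Φ, ∃ c : V →₀ ℤ, (c.support : Set V) ⊆ Δ ∧
      β = c.sum (fun δ z => (z : k) • δ) ∧ ((∀ δ, 0 ≤ c δ) ∨ (∀ δ, c δ ≤ 0)))
    (γ : V ≃ₗ[k] V) (hγΦ : γ '' Φ = Φ)
    (hγpair : ∀ α ∈ Φ, ∀ β ∈ Φ, coroot (γ α) (γ β) = coroot α β)
    (hγΔ : γ '' Δ = Δ)
    (α : V) (hα : α ∈ Φ)
    (l : ℕ) (hl : l = Nat.card (Set.range fun i : ℤ => (γ ^ i) α)) :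
    (∀ i j : ℤ, (γ ^ i) α ≠ (γ ^ j) α → coroot ((γ ^ j) α) ((γ ^ i) α) = 0) ∨
    (Even l ∧ ∀ i j : ℕ, i < j → j < l →
      coroot ((γ ^ j) α) ((γ ^ i) α) = if j - i = l / 2 then (-1 : k) else 0) := by
  have := hfin.to_subtype
  have h0 : (0 : V) ∉ Φ := fun h ↦ by simpa using hself 0 h
  obtain ⟨P, _, hroot, hpair⟩ :=
    exists_isCrystallographic_rootPairing_span hfin coroot hself hrefl hcrys
  obtain ⟨h, hh⟩ := exists_dual_apply_eq_and_ne_zero h0 hΔli hbase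
    (γ := γ.toLinearMap) (mapsTo_iff_image_subset.2 hγΔ.subset)
  obtain ⟨σ, hσ⟩ := exists_perm_coe_zpow γ hγΦ
  obtain ⟨s, hs, hcycle, hcard⟩ := exists_finset_isCycleOn σ ⟨α, hα⟩
  have hσ_one (β : Φ) : (σ β : V) = γ β := hσ 1 β
  have hP (β : Φ) : h.domRestrict _ (P.root β) ≠ 0 := by
    rw [LinearMap.domRestrict_apply, hroot]
    exact (hh β β.2).2
  have hσP (β δ : Φ) : P.pairingIn ℤ (σ β) (σ δ) = P.pairingIn ℤ β δ := by
    rw [← Int.cast_inj (α := k), hpair, hpair, hσ_one, hσ_one, hγpair δ δ.2 β β.2]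
  have hσh (β : Φ) : h.domRestrict _ (P.root (σ β)) = h.domRestrict _ (P.root β) := by
    rw [LinearMap.domRestrict_apply, LinearMap.domRestrict_apply, hroot, hroot, hσ_one]
    exact (hh β β.2).1
  have hl_card : l = s.card := by
    rw [hl, hcard, ← Nat.card_image_of_injective Subtype.val_injective, ← range_comp]
    simp only [Function.comp_def, hσ]
  have hcoroot (i j : ℤ) : coroot ((γ ^ j) α) ((γ ^ i) α) =
      P.pairingIn ℤ ((σ ^ i) ⟨α, hα⟩) ((σ ^ j) ⟨α, hα⟩) := by
    rw [hpair, hσ, hσ]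
  rw [hl_card]
  refine (pairingIn_zpow_eq_zero_or_even_card hP hσP hσh hcycle hs).imp
    (fun hzero i j hij ↦ ?_) (And.imp_right fun hval i j hij hj ↦ ?_)
  · rw [hcoroot, hzero, Int.cast_zero]
    rwa [Ne, ← Subtype.coe_inj, hσ, hσ]
  · simpa only [zpow_natCast, hval i j hij hj, Int.cast_ite, Int.cast_neg, Int.cast_one,
      Int.cast_zero] using hcoroot i j

/-- let `Φ` be a reduced crystallographic root system (over a field
of characteristic zero) with base `Δ`, and `γ` an automorphism of `Φ` mapping
`Δ` onto `Δ`.  For `α ∈ Φ` with `γ`-orbit of cardinality `l`, either any two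
distinct roots in the orbit are orthogonal, or `l` is even and for
`0 ≤ i < j < l` the pairing `⟨γ^i α, (γ^j α)^∨⟩` equals `-1` if `j - i = l/2`
and `0` otherwise (so the orbit generates a subsystem of type `A₂^{l/2}`). -/
theorem stmt2 {k V : Type*} [Field k] [CharZero k] [AddCommGroup V] [Module k V]
    [FiniteDimensional k V]
    (Φ : Set V) (hfin : Φ.Finite) (h0 : (0 : V) ∉ Φ)
    (hspan : Submodule.span k Φ = ⊤)
    (coroot : V → (V →ₗ[k] k))
    (hself : ∀ α ∈ Φ, coroot α α = 2)
    (hrefl : ∀ α ∈ Φ, ∀ β ∈ Φ, β - coroot α β • α ∈ Φ)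
    (hcrys : ∀ α ∈ Φ, ∀ β ∈ Φ, ∃ z : ℤ, coroot α β = (z : k))
    (hred : ∀ α ∈ Φ, ∀ t : k, t • α ∈ Φ → t = 1 ∨ t = -1)
    (Δ : Set V) (hΔΦ : Δ ⊆ Φ)
    (hΔli : LinearIndependent k (fun δ : Δ => (δ : V)))
    (hbase : ∀ β ∈ Φ, ∃ c : V →₀ ℤ, (c.support : Set V) ⊆ Δ ∧
      β = c.sum (fun δ z => (z : k) • δ) ∧ ((∀ δ, 0 ≤ c δ) ∨ (∀ δ, c δ ≤ 0)))
    (γ : V ≃ₗ[k] V) (hγΦ : γ '' Φ = Φ)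
    (hγpair : ∀ α ∈ Φ, ∀ β ∈ Φ, coroot (γ α) (γ β) = coroot α β)
    (hγΔ : γ '' Δ = Δ)
    (α : V) (hα : α ∈ Φ)
    (l : ℕ) (hl : l = Nat.card (Set.range fun i : ℤ => (γ ^ i) α)) :
    (∀ i j : ℤ, (γ ^ i) α ≠ (γ ^ j) α → coroot ((γ ^ j) α) ((γ ^ i) α) = 0) ∨
    (Even l ∧ ∀ i j : ℕ, i < j → j < l →
      coroot ((γ ^ j) α) ((γ ^ i) α) = if j - i = l / 2 then (-1 : k) else 0) :=
  stmt2_general Φ hfin coroot hself hrefl hcrys Δ hΔli hbase γ hγΦ hγpair hγΔ α hα l hl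
end

section
/- Let k be an algebraically closed field of characteristic ≠ 2 and n ≥ 1. Every semisimple (i.e. diagonalizable) element of the orthogonal group O(2n,k) is conjugate, by an element of O(2n,k), to an element of T ∪ J'·T, where T is the subgroup of diagonal matrices in O(2n,k) and J' is the permutation matrix of the transposition (n, n+1). -/
open Matrix

/-- The `N×N` matrix with `1` on the antidiagonal and `0` elsewhere. -/
def antidiagJ (k : Type*) [Field k] (N : ℕ) : Matrix (Fin N) (Fin N) k :=
  Matrix.of fun i j => if (i : ℕ) + (j : ℕ) = N - 1 then 1 else 0

/-- The permutation matrix of the transposition swapping `a` and `b`. -/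
def swapMat (k : Type*) [Field k] (N : ℕ) (a b : Fin N) : Matrix (Fin N) (Fin N) k :=
  Matrix.of fun i j => if j = Equiv.swap a b i then 1 else 0

/-!
View `x` as an isometry `f` of the split quadratic space `k²ⁿ`; a conjugating element of `O(2n, k)`
is a basis with antidiagonal Gram matrix. The eigenspaces of `f` for `c` and `d` are orthogonal
unless `c * d = 1`. Hence every eigenvector for an eigenvalue other than `±1` is isotropic, while if
only `±1` occur and the dimension exceeds `2`, one of the two eigenspaces has dimension at least `2`
and contains an isotropic vector. By nondegeneracy, such an isotropic eigenvector is completed by a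
second eigenvector to a hyperbolic pair, and induction applies to the orthogonal complement. What
remains is a hyperbolic plane; its isotropic vectors lie on two lines, which `f` either preserves or
exchanges, and this gives `T` and `J' T` respectively.
-/

section Isometries

open Module Submodule
open LinearMap (BilinForm)

variable {k V : Type*} [Field k] [AddCommGroup V] [Module k V] {B : BilinForm k V}

lemma exists_apply_add_smul_self_eq_zero [NeZero (2 : k)] (hsq : ∀ a : k, IsSquare a)
    (v : V) {w : V} (hw : B w w ≠ 0) : ∃ t : k, B (v + t • w) (v + t • w) = 0 := by
  obtain ⟨t, ht⟩ := exists_quadratic_eq_zero (b := B v w + B w v) (c := B v v) hw (hsq _)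
  refine ⟨t, ?_⟩
  simp only [map_add, map_smul, LinearMap.add_apply, LinearMap.smul_apply, smul_eq_mul]
  linear_combination ht

lemma exists_isotropic_mem [NeZero (2 : k)] (hsq : ∀ a : k, IsSquare a) (B : BilinForm k V)
    {E : Submodule k V} (hE : 1 < finrank k E) : ∃ v ∈ E, v ≠ 0 ∧ B v v = 0 := by
  have : Nontrivial E := nontrivial_of_finrank_pos (zero_lt_one.trans hE)
  obtain ⟨w, hw⟩ := exists_ne (0 : E)
  obtain ⟨v, hvw⟩ := exists_linearIndependent_pair_of_one_lt_finrank hE hw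
  by_cases hww : B w w = 0
  · exact ⟨w, w.2, by simpa using hw, hww⟩
  obtain ⟨t, ht⟩ := exists_apply_add_smul_self_eq_zero hsq (v : V) hww
  refine ⟨v + t • w, add_mem v.2 (smul_mem _ _ w.2), fun h ↦ ?_, ht⟩
  have h' : t • w + (1 : k) • v = 0 := Subtype.ext (by simpa [add_comm] using h)
  exact one_ne_zero (LinearIndependent.pair_iff.mp hvw t 1 h').2

lemma apply_eq_zero_of_mem_eigenspace {f : End k V} (hf : B.IsOrthogonal f) {c d : k}
    (hcd : c * d ≠ 1) {v w : V} (hv : v ∈ f.eigenspace c) (hw : w ∈ f.eigenspace d) :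
    B v w = 0 := by
  have h := hf v w
  rw [End.mem_eigenspace_iff.mp hv, End.mem_eigenspace_iff.mp hw] at h
  simp only [map_smul, LinearMap.smul_apply, smul_eq_mul] at h
  have : (c * d - 1) * B v w = 0 := by linear_combination h
  exact (mul_eq_zero.mp this).resolve_left (sub_ne_zero.mpr hcd)

lemma exists_isotropic_eigenvector [NeZero (2 : k)] [FiniteDimensional k V]
    (hsq : ∀ a : k, IsSquare a) {f : End k V} (hf : B.IsOrthogonal f)
    (hss : ⨆ μ, f.eigenspace μ = ⊤) (hdim : 2 < finrank k V) :
    ∃ c v, f.HasEigenvector c v ∧ B v v = 0 := by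
  by_cases h : ∃ c, c * c ≠ 1 ∧ f.HasEigenvalue c
  · obtain ⟨c, hc, hfc⟩ := h
    obtain ⟨v, hv⟩ := hfc.exists_hasEigenvector
    exact ⟨c, v, hv, apply_eq_zero_of_mem_eigenspace hf hc hv.1 hv.1⟩
  push Not at h
  have hle : ⨆ μ, f.eigenspace μ ≤ f.eigenspace 1 ⊔ f.eigenspace (-1) := by
    refine iSup_le fun μ ↦ ?_
    by_cases hμ : μ * μ = 1
    · rcases mul_self_eq_one_iff.mp hμ with rfl | rfl
      exacts [le_sup_left, le_sup_right]
    · rw [not_not.mp (End.hasEigenvalue_iff.not.mp (h μ hμ))]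
      exact bot_le
  have hsum : finrank k V ≤ finrank k (f.eigenspace 1) + finrank k (f.eigenspace (-1)) := by
    rw [← finrank_top k V, ← top_le_iff.mp (hss ▸ hle)]
    exact finrank_add_le_finrank_add_finrank _ _
  obtain ⟨c, hc⟩ : ∃ c, 1 < finrank k (f.eigenspace c) := by
    by_contra! hsmall
    have := hsmall 1
    have := hsmall (-1)
    omega
  obtain ⟨v, hv, hv0, hvv⟩ := exists_isotropic_mem hsq B hc
  exact ⟨c, v, ⟨hv, hv0⟩, hvv⟩

/-- The Gram matrix of the family `b` with respect to `B` has `1` on the antidiagonal and `0`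
elsewhere: `b i` and `b i.rev` span mutually orthogonal hyperbolic planes (and the middle vector,
if there is one, is a unit vector). -/
def HasAntidiagGram (B : BilinForm k V) {N : ℕ} (b : Fin N → V) : Prop :=
  ∀ i j, B (b i) (b j) = if j = i.rev then 1 else 0

lemma hasAntidiagGram_pair (hB : B.IsSymm) {v w : V} (hv : B v v = 0) (hw : B w w = 0)
    (hvw : B v w = 1) : HasAntidiagGram B ![v, w] := by
  simp [HasAntidiagGram, Fin.forall_fin_two, hv, hw, hvw, hB.eq w v]

namespace HasAntidiagGram

variable {N : ℕ} {b : Fin N → V}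

lemma apply_sum_smul (h : HasAntidiagGram B b) (a : Fin N → k) (i : Fin N) :
    B (b i) (∑ j, a j • b j) = a i.rev := by
  simp [h i _]

lemma linearIndependent (h : HasAntidiagGram B b) : LinearIndependent k b := by
  refine Fintype.linearIndependent_iff.mpr fun a ha i ↦ ?_
  rw [← i.rev_rev, ← h.apply_sum_smul a, ha, map_zero]

lemma finrank_span (h : HasAntidiagGram B b) : finrank k (span k (Set.range b)) = N := by
  rw [finrank_span_eq_card h.linearIndependent, Fintype.card_fin]

lemma disjoint_orthogonal (h : HasAntidiagGram B b) :
    Disjoint (span k (Set.range b)) (B.orthogonal (span k (Set.range b))) := by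
  refine disjoint_def.mpr fun u hu hu' ↦ ?_
  obtain ⟨a, rfl⟩ := (mem_span_range_iff_exists_fun k).mp hu
  have ha : ∀ i, a i = 0 := fun i ↦ by
    rw [← i.rev_rev, ← h.apply_sum_smul a]
    exact hu' _ (subset_span ⟨_, rfl⟩)
  simp [ha]

lemma mul_rev_eq_one (h : HasAntidiagGram B b) {f : End k V} (hf : B.IsOrthogonal f)
    {σ : Equiv.Perm (Fin N)} (hσ : ∀ i, σ i.rev = (σ i).rev) {c : Fin N → k}
    (hc : ∀ i, f (b i) = c i • b (σ i)) (i : Fin N) : c i * c i.rev = 1 := by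
  simpa [hc, h _ _, hσ, mul_comm] using hf (b i) (b i.rev)

end HasAntidiagGram

lemma exists_hasAntidiagGram_pair_mem [NeZero (2 : k)] (hB : B.IsSymm) {E : Submodule k V}
    {v w : V} (hv : v ∈ E) (hw : w ∈ E) (hvv : B v v = 0) (hvw : B v w ≠ 0) :
    ∃ u ∈ E, HasAntidiagGram B ![v, u] := by
  refine ⟨(B v w)⁻¹ • (w - (B w w / (2 * B v w)) • v),
    smul_mem _ _ (sub_mem hw (smul_mem _ _ hv)), hasAntidiagGram_pair hB hvv ?_ ?_⟩
  · have h2 : (2 : k) ≠ 0 := two_ne_zero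
    simp only [map_smul, map_sub, LinearMap.smul_apply, LinearMap.sub_apply, smul_eq_mul, hvv,
      hB.eq w v]
    field_simp
    ring
  · simp [hvv, hvw]

lemma exists_hasAntidiagGram_pair_eigenvector [NeZero (2 : k)] (hB : B.IsSymm)
    (hnd : B.Nondegenerate) {f : End k V} (hf : B.IsOrthogonal f)
    (hss : ⨆ μ, f.eigenspace μ = ⊤) {c : k} {v : V} (hv : f.HasEigenvector c v)
    (hvv : B v v = 0) : ∃ d, ∃ w ∈ f.eigenspace d, HasAntidiagGram B ![v, w] := by
  obtain ⟨d, w, hw, hvw⟩ : ∃ d, ∃ w ∈ f.eigenspace d, B v w ≠ 0 := by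
    by_contra! h
    have hker : (⊤ : Submodule k V) ≤ LinearMap.ker (B v) := hss ▸ iSup_le h
    exact hv.2 (hnd.1 v fun w ↦ hker mem_top)
  have hcd : c * d = 1 := by
    by_contra hcd
    exact hvw (apply_eq_zero_of_mem_eigenspace hf hcd hv.1 hw)
  by_cases hdd : d * d = 1
  · obtain rfl : c = d := by
      rw [← mul_one c, ← hdd, ← mul_assoc, hcd, one_mul]
    exact ⟨c, exists_hasAntidiagGram_pair_mem hB hv.1 hw hvv hvw⟩
  · have hww : B w w = 0 := apply_eq_zero_of_mem_eigenspace hf hdd hw hw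
    exact ⟨d, (B v w)⁻¹ • w, smul_mem _ _ hw,
      hasAntidiagGram_pair hB hvv (by simp [hww]) (by simp [hvw])⟩

lemma mapsTo_orthogonal_of_le_map {f : End k V} (hf : B.IsOrthogonal f) {P : Submodule k V}
    (hP : P ≤ P.map f) : ∀ u ∈ B.orthogonal P, f u ∈ B.orthogonal P := by
  intro u hu p hp
  obtain ⟨p, hp', rfl⟩ := hP hp
  exact (hf p u).trans (hu p hp')

lemma nondegenerate_restrict_orthogonal [FiniteDimensional k V] (hB : B.IsRefl)
    (hnd : B.Nondegenerate) {P : Submodule k V} (hP : Disjoint P (B.orthogonal P)) :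
    (B.restrict (B.orthogonal P)).Nondegenerate := by
  refine B.nondegenerate_restrict_of_disjoint_orthogonal hB ?_
  rwa [BilinForm.orthogonal_orthogonal hnd hB, disjoint_comm]

/-- The family `v, b 0, …, b (N - 1), w`: for the antidiagonal Gram form, a new hyperbolic pair
`v, w` enters around the family `b`. -/
def consSnoc {α : Type*} {N : ℕ} (v : α) (b : Fin N → α) (w : α) : Fin (N + 1 + 1) → α :=
  Fin.cons v (Fin.snoc b w : Fin (N + 1) → α)

section consSnoc

variable {α : Type*} {N : ℕ}

@[simp] lemma consSnoc_zero (v : α) (b : Fin N → α) (w : α) : consSnoc v b w 0 = v := rfl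

@[simp] lemma consSnoc_last (v : α) (b : Fin N → α) (w : α) :
    consSnoc v b w (Fin.last _) = w := by
  simp [consSnoc, ← Fin.succ_last]

@[simp] lemma consSnoc_castSucc_succ (v : α) (b : Fin N → α) (w : α) (i : Fin N) :
    consSnoc v b w i.castSucc.succ = b i := by
  simp [consSnoc]

lemma forall_fin_add_two {p : Fin (N + 1 + 1) → Prop} (zero : p 0) (last : p (Fin.last _))
    (mid : ∀ i : Fin N, p i.castSucc.succ) (i : Fin (N + 1 + 1)) : p i :=
  i.cases zero (Fin.lastCases last mid)

end consSnoc

lemma castSucc_succ_ne_last {N : ℕ} (i : Fin N) : i.castSucc.succ ≠ Fin.last (N + 1) :=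
  Fin.succ_last N ▸ (Fin.succ_injective _).ne i.castSucc_ne_last

lemma rev_castSucc_succ {N : ℕ} (i : Fin N) : i.castSucc.succ.rev = i.rev.castSucc.succ := by
  rw [Fin.rev_succ, Fin.rev_castSucc, Fin.succ_castSucc]

lemma HasAntidiagGram.consSnoc {N : ℕ} {b : Fin N → V} (hb : HasAntidiagGram B b)
    (hB : B.IsSymm) {v w : V} (hvw : HasAntidiagGram B ![v, w]) (hv : ∀ i, B v (b i) = 0)
    (hw : ∀ i, B w (b i) = 0) : HasAntidiagGram B (consSnoc v b w) := by
  have hv' : ∀ i, B (b i) v = 0 := fun i ↦ (hB.eq v (b i)).symm.trans (hv i)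
  have hw' : ∀ i, B (b i) w = 0 := fun i ↦ (hB.eq w (b i)).symm.trans (hw i)
  have hpair := Fin.forall_fin_two.mp fun i ↦ Fin.forall_fin_two.mp (hvw i)
  refine forall_fin_add_two ?_ ?_ fun i ↦ ?_ <;> refine forall_fin_add_two ?_ ?_ fun j ↦ ?_ <;>
    simp_all [hb _ _, rev_castSucc_succ, (Fin.succ_ne_zero _).symm, (castSucc_succ_ne_last _).symm]

lemma apply_consSnoc {f : End k V} {N : ℕ} {b : Fin N → V} {σ : Equiv.Perm (Fin N)}
    {c : Fin N → k} (hb : ∀ i, f (b i) = c i • b (σ i)) {v w : V} {c₀ c₁ : k}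
    (hv : f v = c₀ • v) (hw : f w = c₁ • w) {τ : Equiv.Perm (Fin (N + 1 + 1))}
    (hτ₀ : τ 0 = 0) (hτ₁ : τ (Fin.last _) = Fin.last _)
    (hτ : ∀ i : Fin N, τ i.castSucc.succ = (σ i).castSucc.succ) :
    ∀ i, f (consSnoc v b w i) = consSnoc c₀ c c₁ i • consSnoc v b w (τ i) :=
  forall_fin_add_two (by simpa [hτ₀]) (by simpa [hτ₁]) fun i ↦ by simp [hτ, hb]

lemma HasAntidiagGram.exists_eq_smul_of_isotropic [NeZero (2 : k)] (hdim : finrank k V = 2)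
    {b : Fin 2 → V} (hb : HasAntidiagGram B b) {u : V} (hu : B u u = 0) :
    ∃ (c : k) (i : Fin 2), u = c • b i := by
  have : FiniteDimensional k V := .of_finrank_pos (hdim ▸ two_pos)
  have hspan : span k (Set.range b) = ⊤ :=
    hb.linearIndependent.span_eq_top_of_card_eq_finrank' (by simp [hdim])
  obtain ⟨a, rfl⟩ := (mem_span_range_iff_exists_fun k).mp (hspan ▸ mem_top : u ∈ _)
  have ha : 2 * (a 0 * a 1) = 0 := by
    rw [two_mul]
    simpa [Fin.sum_univ_two, hb _ _, mul_comm (a 1)] using hu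
  rcases mul_eq_zero.mp ((mul_eq_zero.mp ha).resolve_left two_ne_zero) with h | h
  · exact ⟨a 1, 1, by simp [Fin.sum_univ_two, h]⟩
  · exact ⟨a 0, 0, by simp [Fin.sum_univ_two, h]⟩

lemma HasAntidiagGram.exists_perm_of_finrank_eq_two [NeZero (2 : k)] (hdim : finrank k V = 2)
    {b : Fin 2 → V} (hb : HasAntidiagGram B b) {f : End k V} (hf : B.IsOrthogonal f) :
    ∃ (σ : Equiv.Perm (Fin 2)) (c : Fin 2 → k), (σ = 1 ∨ σ = Equiv.swap 0 1) ∧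
      ∀ i, f (b i) = c i • b (σ i) := by
  have hline : ∀ i, ∃ (c : k) (j : Fin 2), f (b i) = c • b j := fun i ↦
    hb.exists_eq_smul_of_isotropic hdim ((hf _ _).trans (by fin_cases i <;> simp [hb _ _]))
  choose c τ hτ using hline
  have hτ₁ : τ 1 = (τ 0).rev := by
    by_contra hne
    have h := hf (b 0) (b 1)
    simp [hτ, hb _ _, hne] at h
  obtain h₀ | h₀ : τ 0 = 0 ∨ τ 0 = 1 := by omega
  · refine ⟨1, c, .inl rfl, Fin.forall_fin_two.mpr ⟨?_, ?_⟩⟩ <;> simp [hτ, hτ₁, h₀]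
  · refine ⟨Equiv.swap 0 1, c, .inr rfl, Fin.forall_fin_two.mpr ⟨?_, ?_⟩⟩ <;> simp [hτ, hτ₁, h₀]

lemma exists_hasAntidiagGram_of_finrank_eq_two [NeZero (2 : k)] (hsq : ∀ a : k, IsSquare a)
    (hB : B.IsSymm) (hnd : B.Nondegenerate) (hdim : finrank k V = 2) :
    ∃ b : Fin 2 → V, HasAntidiagGram B b := by
  obtain ⟨v, -, hv, hvv⟩ :=
    exists_isotropic_mem hsq B (E := ⊤) (by rw [finrank_top, hdim]; exact one_lt_two)
  obtain ⟨w, hvw⟩ : ∃ w, B v w ≠ 0 := by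
    by_contra! h
    exact hv (hnd.1 v h)
  obtain ⟨u, -, hu⟩ := exists_hasAntidiagGram_pair_mem hB (mem_top (x := v)) mem_top hvv hvw
  exact ⟨_, hu⟩

lemma swap_rev_castSucc_succ {N : ℕ} (m i : Fin N) :
    Equiv.swap m.castSucc.succ m.castSucc.succ.rev i.castSucc.succ =
      (Equiv.swap m m.rev i).castSucc.succ := by
  rw [rev_castSucc_succ]
  exact ((Fin.succ_injective _).comp (Fin.castSucc_injective N)).swap_apply m m.rev i

/-- In some basis with antidiagonal Gram matrix, `f` is diagonal up to a possible transposition of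
the basis vectors numbered `m` and `m.rev`. For the two middle indices this is the basis-free form
of being conjugate into `T ∪ J'·T`. -/
def IsDiagUpToSwap (B : BilinForm k V) (f : End k V) {N : ℕ} (m : Fin N) : Prop :=
  ∃ (b : Fin N → V) (σ : Equiv.Perm (Fin N)) (c : Fin N → k), HasAntidiagGram B b ∧
    (σ = 1 ∨ σ = Equiv.swap m m.rev) ∧ ∀ i, f (b i) = c i • b (σ i)

lemma isDiagUpToSwap_of_finrank_eq_two [NeZero (2 : k)] (hsq : ∀ a : k, IsSquare a)
    (hB : B.IsSymm) (hnd : B.Nondegenerate) {f : End k V} (hf : B.IsOrthogonal f)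
    (hdim : finrank k V = 2) : IsDiagUpToSwap B f (0 : Fin 2) := by
  obtain ⟨b, hb⟩ := exists_hasAntidiagGram_of_finrank_eq_two hsq hB hnd hdim
  obtain ⟨σ, c, hσ, hc⟩ := hb.exists_perm_of_finrank_eq_two hdim hf
  exact ⟨b, σ, c, hb, hσ, hc⟩

lemma IsDiagUpToSwap.of_restrict (hB : B.IsSymm) {f : End k V} {v w : V}
    (hvw : HasAntidiagGram B ![v, w]) {c₀ c₁ : k} (hv : f v = c₀ • v) (hw : f w = c₁ • w)
    {P : Submodule k V} (hvP : v ∈ P) (hwP : w ∈ P)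
    (hf : ∀ u ∈ B.orthogonal P, f u ∈ B.orthogonal P) {N : ℕ} {m : Fin N}
    (h : IsDiagUpToSwap (B.restrict (B.orthogonal P)) (f.restrict hf) m) :
    IsDiagUpToSwap B f m.castSucc.succ := by
  obtain ⟨b, σ, c, hb, hσ, hc⟩ := h
  have hb' : HasAntidiagGram B fun i ↦ (b i : V) := hb
  have hc' : ∀ i, f (b i) = c i • (b (σ i) : V) := fun i ↦ congrArg Subtype.val (hc i)
  have hbasis := hb'.consSnoc hB hvw (fun i ↦ (b i).2 v hvP) (fun i ↦ (b i).2 w hwP)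
  rcases hσ with rfl | rfl
  · exact ⟨_, 1, _, hbasis, .inl rfl, apply_consSnoc hc' hv hw rfl rfl fun _ ↦ rfl⟩
  · refine ⟨_, _, _, hbasis, .inr rfl, apply_consSnoc hc' hv hw ?_ ?_ (swap_rev_castSucc_succ m)⟩
    · rw [rev_castSucc_succ]
      exact Equiv.swap_apply_of_ne_of_ne (Fin.succ_ne_zero _).symm (Fin.succ_ne_zero _).symm
    · rw [rev_castSucc_succ]
      exact Equiv.swap_apply_of_ne_of_ne (castSucc_succ_ne_last _).symm
        (castSucc_succ_ne_last _).symm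

lemma span_range_le_map {v w : V} (hvw : HasAntidiagGram B ![v, w]) {f : End k V}
    (hf : B.IsOrthogonal f) {c d : k} (hv : f v = c • v) (hw : f w = d • w) :
    span k (Set.range ![v, w]) ≤ (span k (Set.range ![v, w])).map f := by
  have hcd : c * d = 1 := by simpa [hv, hw, show B v w = 1 from hvw 0 1, mul_comm] using hf v w
  refine span_le.mpr (Set.range_subset_iff.mpr (Fin.forall_fin_two.mpr ⟨?_, ?_⟩))
  · exact ⟨d • v, smul_mem _ _ (subset_span ⟨0, rfl⟩), by simp [hv, smul_smul, mul_comm d, hcd]⟩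
  · exact ⟨c • w, smul_mem _ _ (subset_span ⟨1, rfl⟩), by simp [hw, smul_smul, hcd]⟩

theorem isDiagUpToSwap_of_finrank_eq [NeZero (2 : k)] (hsq : ∀ a : k, IsSquare a) (n : ℕ)
    (hB : B.IsSymm) (hnd : B.Nondegenerate) {f : End k V} (hf : B.IsOrthogonal f)
    (hss : ⨆ μ, f.eigenspace μ = ⊤) (hdim : finrank k V = 2 * (n + 1)) :
    IsDiagUpToSwap B f (⟨n, by omega⟩ : Fin (2 * (n + 1))) := by
  induction n generalizing V with
  | zero => exact isDiagUpToSwap_of_finrank_eq_two hsq hB hnd hf hdim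
  | succ n ih =>
    have : FiniteDimensional k V := .of_finrank_pos (by omega)
    obtain ⟨c, v, hv, hvv⟩ := exists_isotropic_eigenvector hsq hf hss (by omega)
    obtain ⟨d, w, hw, hvw⟩ := exists_hasAntidiagGram_pair_eigenvector hB hnd hf hss hv hvv
    have hfv := End.mem_eigenspace_iff.mp hv.1
    have hfw := End.mem_eigenspace_iff.mp hw
    have hmaps := mapsTo_orthogonal_of_le_map hf (span_range_le_map hvw hf hfv hfw)
    have hdimW : finrank k (B.orthogonal (span k (Set.range ![v, w]))) = 2 * (n + 1) := by
      rw [BilinForm.finrank_orthogonal hnd, hvw.finrank_span]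
      omega
    have hW := ih (hB.restrict _)
      (nondegenerate_restrict_orthogonal hB.isRefl hnd hvw.disjoint_orthogonal)
      (fun x y ↦ hf x y) (End.genEigenspace_restrict_eq_top hmaps hss) hdimW
    exact hW.of_restrict (P := span k (Set.range ![v, w])) hB hvw hfv hfw
      (subset_span ⟨0, rfl⟩) (subset_span ⟨1, rfl⟩)

end Isometries

section Matrices

open Module

variable {ι R : Type*} [Fintype ι] [DecidableEq ι] [CommRing R]

lemma iSup_eigenspace_toLin'_eq_top_of_isDiag {x P : Matrix ι ι R} (hP : IsUnit P.det)
    (hdiag : (P * x * P⁻¹).IsDiag) : ⨆ μ, End.eigenspace x.toLin' μ = ⊤ := by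
  have hxP : x * P⁻¹ = P⁻¹ * diagonal (P * x * P⁻¹).diag := by
    rw [(isDiag_iff_diagonal_diag _).mp hdiag, mul_assoc, nonsing_inv_mul_cancel_left _ _ hP]
  have hcol : ∀ j, x *ᵥ P⁻¹.col j = (P * x * P⁻¹).diag j • P⁻¹.col j := fun j ↦ by
    ext i
    exact (congrFun₂ hxP i j).trans ((mul_diagonal _ _ _ _).trans (mul_comm _ _))
  refine eq_top_iff.mpr fun u _ ↦ ?_
  rw [← one_mulVec u, ← nonsing_inv_mul P hP, ← mulVec_mulVec, mulVec_eq_sum]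
  simp only [op_smul_eq_smul]
  exact sum_mem fun j _ ↦ Submodule.smul_mem _ _
    (Submodule.mem_iSup_of_mem _ (End.mem_eigenspace_iff.mpr (hcol j)))

lemma transpose_mul_mul_apply (M q : Matrix ι ι R) (i j : ι) :
    (qᵀ * M * q) i j = M.toBilin' (q.col i) (q.col j) := by
  rw [toBilin'_apply', mul_assoc, mul_apply]
  rfl

lemma isOrthogonal_toLin'_of_transpose_mul_mul_eq {M x : Matrix ι ι R} (hx : xᵀ * M * x = M) :
    M.toBilin'.IsOrthogonal x.toLin' := fun u v ↦ by
  have h := LinearMap.congr_fun₂ (M.toBilin'_comp x x) u v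
  rwa [hx] at h

lemma inv_mul_mul_eq_permMatrix_mul_diagonal {x q : Matrix ι ι R} (hq : IsUnit q.det)
    {σ : Equiv.Perm ι} {c : ι → R} (h : ∀ j, x *ᵥ q.col j = c j • q.col (σ j)) :
    q⁻¹ * x * q = σ⁻¹.permMatrix R * diagonal c := by
  have hxq : x * q = q * (σ⁻¹.permMatrix R * diagonal c) := by
    ext i j
    rw [← mul_assoc, mul_diagonal, PEquiv.mul_toMatrix_toPEquiv, mul_comm]
    exact congrFun (h j) i
  rw [mul_assoc, hxq, nonsing_inv_mul_cancel_left _ _ hq]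

end Matrices

section Antidiagonal

variable {k : Type*} [Field k] {N : ℕ}

lemma antidiagJ_apply (i j : Fin N) : antidiagJ k N i j = if j = i.rev then 1 else 0 := by
  simp only [antidiagJ, of_apply, Fin.ext_iff, Fin.val_rev]
  congr 1
  grind

lemma antidiagJ_eq_permMatrix : antidiagJ k N = Fin.revPerm.permMatrix k := by
  ext i j
  simp [antidiagJ_apply, PEquiv.toMatrix_apply, eq_comm]

lemma swapMat_eq_permMatrix (a b : Fin N) : swapMat k N a b = (Equiv.swap a b).permMatrix k := by
  ext i j
  simp [swapMat, PEquiv.toMatrix_apply, eq_comm]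

lemma isSymm_antidiagJ : (antidiagJ k N).IsSymm := by
  rw [IsSymm, antidiagJ_eq_permMatrix, transpose_permMatrix]
  rfl

lemma det_antidiagJ_ne_zero : (antidiagJ k N).det ≠ 0 := by
  rw [antidiagJ_eq_permMatrix, det_permutation]
  exact ((Equiv.Perm.sign _).isUnit.map (Int.castRingHom k)).ne_zero

lemma isUnit_det_of_transpose_mul_antidiagJ_mul {q : Matrix (Fin N) (Fin N) k}
    (hq : qᵀ * antidiagJ k N * q = antidiagJ k N) : IsUnit q.det := by
  have h := congrArg det hq
  rw [det_mul] at h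
  exact .mk0 _ (right_ne_zero_of_mul (h ▸ det_antidiagJ_ne_zero))

lemma hasAntidiagGram_col_iff {q : Matrix (Fin N) (Fin N) k} :
    HasAntidiagGram (antidiagJ k N).toBilin' q.col ↔
      qᵀ * antidiagJ k N * q = antidiagJ k N := by
  simp only [HasAntidiagGram, ← transpose_mul_mul_apply, ← antidiagJ_apply, ← Matrix.ext_iff]

lemma transpose_diagonal_mul_antidiagJ_mul {c : Fin N → k} (hc : ∀ i, c i * c i.rev = 1) :
    (diagonal c)ᵀ * antidiagJ k N * diagonal c = antidiagJ k N := by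
  ext i j
  rw [diagonal_transpose, mul_diagonal, diagonal_mul, antidiagJ_apply]
  split_ifs with h
  · rw [h, mul_one, hc]
  · simp

lemma swap_rev_apply_rev (m i : Fin N) :
    Equiv.swap m m.rev i.rev = (Equiv.swap m m.rev i).rev := by
  rw [← Fin.rev_injective.swap_apply, Fin.rev_rev, Equiv.swap_comm]

lemma IsDiagUpToSwap.exists_conj {x : Matrix (Fin N) (Fin N) k}
    (hx : xᵀ * antidiagJ k N * x = antidiagJ k N) {m : Fin N}
    (h : IsDiagUpToSwap (antidiagJ k N).toBilin' x.toLin' m) :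
    ∃ q : Matrix (Fin N) (Fin N) k, qᵀ * antidiagJ k N * q = antidiagJ k N ∧
      ((q⁻¹ * x * q).IsDiag ∨ ∃ t : Matrix (Fin N) (Fin N) k,
        tᵀ * antidiagJ k N * t = antidiagJ k N ∧ t.IsDiag ∧
          q⁻¹ * x * q = swapMat k N m m.rev * t) := by
  obtain ⟨b, σ, c, hb, hσ, hc⟩ := h
  have hq := hasAntidiagGram_col_iff (q := (of b)ᵀ).mp hb
  have hconj := inv_mul_mul_eq_permMatrix_mul_diagonal
    (isUnit_det_of_transpose_mul_antidiagJ_mul hq) hc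
  refine ⟨(of b)ᵀ, hq, ?_⟩
  rcases hσ with rfl | rfl
  · left
    rw [hconj, inv_one, permMatrix_one, one_mul]
    exact isDiag_diagonal c
  · have hcc := hb.mul_rev_eq_one (isOrthogonal_toLin'_of_transpose_mul_mul_eq hx)
      (swap_rev_apply_rev m) hc
    rw [Equiv.swap_inv, ← swapMat_eq_permMatrix] at hconj
    exact .inr ⟨diagonal c, transpose_diagonal_mul_antidiagJ_mul hcc, isDiag_diagonal c, hconj⟩

end Antidiagonal

theorem stmt7_general {k : Type*} [Field k] (hchar : (2 : k) ≠ 0)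
    (hsq : ∀ a : k, IsSquare a) (n : ℕ) (hn : 0 < n)
    (x : Matrix (Fin (2 * n)) (Fin (2 * n)) k)
    (hx : x.transpose * antidiagJ k (2 * n) * x = antidiagJ k (2 * n))
    (hss : ∃ P : Matrix (Fin (2 * n)) (Fin (2 * n)) k,
      IsUnit P.det ∧ (P * x * P⁻¹).IsDiag) :
    ∃ q : Matrix (Fin (2 * n)) (Fin (2 * n)) k,
      q.transpose * antidiagJ k (2 * n) * q = antidiagJ k (2 * n) ∧
      ((q⁻¹ * x * q).IsDiag ∨
        ∃ t : Matrix (Fin (2 * n)) (Fin (2 * n)) k,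
          t.transpose * antidiagJ k (2 * n) * t = antidiagJ k (2 * n) ∧ t.IsDiag ∧
          q⁻¹ * x * q =
            swapMat k (2 * n) ⟨n - 1, by omega⟩ ⟨n, by omega⟩ * t) := by
  have : NeZero (2 : k) := ⟨hchar⟩
  obtain ⟨P, hP, hdiag⟩ := hss
  obtain ⟨n, rfl⟩ := Nat.exists_eq_add_one.mpr hn
  have hdiagSwap := isDiagUpToSwap_of_finrank_eq hsq n
    (isSymm_toBilin'_iff_isSymm.mpr isSymm_antidiagJ)
    (LinearMap.BilinForm.nondegenerate_toBilin'_iff_det_ne_zero.mpr det_antidiagJ_ne_zero)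
    (isOrthogonal_toLin'_of_transpose_mul_mul_eq hx)
    (iSup_eigenspace_toLin'_eq_top_of_isDiag hP hdiag) (Module.finrank_fin_fun k)
  have hrev : (⟨n, by omega⟩ : Fin (2 * (n + 1))).rev = ⟨n + 1, by omega⟩ := by grind
  exact hrev ▸ hdiagSwap.exists_conj hx

/-- over an algebraically closed field of characteristic `≠ 2`,
every semisimple (diagonalizable) element of `O(2n,k)` is conjugate, by an
element of `O(2n,k)`, to an element of `T ∪ J'·T`, where `T` is the diagonal
subgroup of `O(2n,k)` and `J'` is the permutation matrix of the transposition
`(n, n+1)`. -/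
theorem stmt7 {k : Type*} [Field k] [IsAlgClosed k] (hchar : (2 : k) ≠ 0)
    (n : ℕ) (hn : 1 ≤ n)
    (x : Matrix (Fin (2 * n)) (Fin (2 * n)) k)
    (hx : x.transpose * antidiagJ k (2 * n) * x = antidiagJ k (2 * n))
    (hss : ∃ P : Matrix (Fin (2 * n)) (Fin (2 * n)) k,
      IsUnit P.det ∧ (P * x * P⁻¹).IsDiag) :
    ∃ q : Matrix (Fin (2 * n)) (Fin (2 * n)) k,
      q.transpose * antidiagJ k (2 * n) * q = antidiagJ k (2 * n) ∧
      ((q⁻¹ * x * q).IsDiag ∨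
        ∃ t : Matrix (Fin (2 * n)) (Fin (2 * n)) k,
          t.transpose * antidiagJ k (2 * n) * t = antidiagJ k (2 * n) ∧ t.IsDiag ∧
          q⁻¹ * x * q =
            swapMat k (2 * n) ⟨n - 1, by omega⟩ ⟨n, by omega⟩ * t) :=
  stmt7_general hchar (fun a ↦ IsAlgClosed.exists_eq_mul_self a) n hn x hx hss
end

section
/- Let k be a field, l ≥ 1, and let g ∈ GL(l,k) be a monomial matrix whose underlying permutation is an l-cycle. Then there exists an invertible diagonal matrix t ∈ GL(l,k) such that all but at most one of the l nonzero entries of the monomial matrix t·g·t are equal to 1. (Equivalently, t·g·γ(t⁻¹) has this property, since γ(t⁻¹) = t for diagonal t, where γ(x) = (ᵀx)⁻¹.) -/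
/-
The entry of `t * g * t` at `(σ j, j)` is `t (σ j) * g (σ j) j * t j`, so requiring it to be `1`
determines `t (σ j)` from `t j`. Starting with `t i₀ = 1` and walking once around the cycle solves
all of these equations except the one at the last index, where the walk returns to `i₀`.
-/

section Orbit

variable {α β : Type*} {f : α → α} {x₀ : α}

lemma exists_time_of_orbit (hf : f.Injective) (hx₀ : ∀ x, ∃ n, f^[n] x₀ = x) :
    ∃ n : α → ℕ, n x₀ = 0 ∧ (∀ x, f^[n x] x₀ = x) ∧ ∀ x, f x ≠ x₀ → n (f x) = n x + 1 := by
  classical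
  have hspec (x : α) : f^[Nat.find (hx₀ x)] x₀ = x := Nat.find_spec (hx₀ x)
  refine ⟨fun x ↦ Nat.find (hx₀ x), (Nat.find_eq_zero _).2 rfl, hspec, fun x hx ↦ ?_⟩
  refine (Nat.find_eq_iff _).2 ⟨by rw [Function.iterate_succ_apply', hspec], ?_⟩
  rintro (_ | m) hm h
  · exact hx h.symm
  · rw [Function.iterate_succ_apply'] at h
    exact Nat.find_min (hx₀ x) (Nat.lt_of_succ_lt_succ hm) (hf h)

lemma exists_recursion_along_orbit (hf : f.Injective) (hx₀ : ∀ x, ∃ n, f^[n] x₀ = x)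
    (b : β) (F : α → β → β) :
    ∃ t : α → β, t x₀ = b ∧ ∀ x, f x ≠ x₀ → t (f x) = F x (t x) := by
  obtain ⟨n, hn₀, hn, hn_succ⟩ := exists_time_of_orbit hf hx₀
  let s : ℕ → β := Nat.rec b fun m ↦ F (f^[m] x₀)
  have hs_succ (m : ℕ) : s (m + 1) = F (f^[m] x₀) (s m) := rfl
  refine ⟨s ∘ n, congrArg s hn₀, fun x hx ↦ ?_⟩
  rw [Function.comp_apply, Function.comp_apply, hn_succ x hx, hs_succ, hn]

lemma exists_mul_mul_eq_one_along_orbit {G : Type*} [Group G] (hf : f.Injective)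
    (hx₀ : ∀ x, ∃ n, f^[n] x₀ = x) (c : α → G) :
    ∃ t : α → G, ∀ x, f x ≠ x₀ → t (f x) * c x * t x = 1 := by
  obtain ⟨t, -, ht⟩ := exists_recursion_along_orbit hf hx₀ 1 fun x u ↦ (c x * u)⁻¹
  exact ⟨t, fun x hx ↦ by rw [ht x hx, mul_assoc, inv_mul_cancel]⟩

end Orbit

theorem stmt8_general {R ι : Type*} [Semiring R] [Fintype ι] [DecidableEq ι]
    (g : Matrix ι ι R) (σ : Equiv.Perm ι) (hunit : ∀ j, IsUnit (g (σ j) j))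
    (i₀ : ι) (horbit : ∀ j, ∃ a : ℕ, (σ ^ a) i₀ = j) :
    ∃ t : ι → Rˣ, ∀ j, σ j ≠ i₀ →
      (Matrix.diagonal (fun i => (t i : R)) * g *
        Matrix.diagonal (fun i => (t i : R))) (σ j) j = 1 := by
  simp only [← Equiv.Perm.iterate_eq_pow] at horbit
  choose c hc using hunit
  obtain ⟨t, ht⟩ := exists_mul_mul_eq_one_along_orbit σ.injective horbit c
  refine ⟨t, fun j hj ↦ ?_⟩
  rw [Matrix.mul_diagonal, Matrix.diagonal_mul, ← hc]
  exact congrArg Units.val (ht j hj)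

/-- if `g ∈ GL(l,k)` is a monomial matrix whose underlying
permutation `σ` is an `l`-cycle (i.e. `σ` acts transitively on the `l`
indices), then there is an invertible diagonal matrix `t` such that all but at
most one of the `l` nonzero entries of `t·g·t` are equal to `1`. -/
theorem stmt8 {k : Type*} [Field k] (l : ℕ) (hl : 1 ≤ l)
    (g : Matrix (Fin l) (Fin l) k) (hunit : IsUnit g.det)
    (σ : Equiv.Perm (Fin l))
    (hmono : ∀ i j, i ≠ σ j → g i j = 0)
    (hnz : ∀ j, g (σ j) j ≠ 0)
    (hcycle : ∀ i j : Fin l, ∃ a : ℕ, (σ ^ a) i = j) :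
    ∃ t : Fin l → kˣ, ∃ j₀ : Fin l, ∀ j, j ≠ j₀ →
      (Matrix.diagonal (fun i => (t i : k)) * g *
        Matrix.diagonal (fun i => (t i : k))) (σ j) j = 1 := by
  obtain ⟨t, ht⟩ := stmt8_general g σ (fun j ↦ (hnz j).isUnit) ⟨0, hl⟩ (hcycle _)
  exact ⟨t, σ.symm ⟨0, hl⟩, fun j hj ↦ ht j (mt σ.eq_symm_apply.2 hj)⟩
end

section
/- Let k be a field, l an even positive integer, and let g ∈ GL(l,k) be a monomial matrix whose underlying permutation is an l-cycle and all but one of whose nonzero entries are equal to 1. Then the remaining nonzero entry of g equals −det g, and the matrix (g·γ(g))^{l/2}, where γ(g) = (ᵀg)⁻¹, is diagonal with exactly l/2 diagonal entries equal to −det g and exactly l/2 diagonal entries equal to −(det g)⁻¹. -/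
/-!
Write `h = g * γ(g)` and let `σ` be the underlying `l`-cycle. Both `g` and `γ(g)` are monomial
over `σ`, so `h ^ (l / 2)` is monomial over `σ ^ l = 1`, that is, diagonal. Its entry at `j` is the
alternating product `e j = ∏ u (σ ^ (2i+1) j) / u (σ ^ (2i) j)` of the nonzero entries `u` of `g`
once around the cycle. The product `e (σ j) * e j` telescopes to `1`, so `e` takes two mutually
inverse values alternately along the cycle. At the column `j₀` of the exceptional entry `b`, only
`u j₀ = b` contributes, whence `e j₀ = b⁻¹`; and `b = -det g` because a cycle of even length is odd.
-/

section MonomialMatrix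

variable {ι R : Type*} [DecidableEq ι]

/-- The monomial matrix with underlying permutation `σ` and nonzero entries `c`. The entries are
indexed by columns: the one in column `j` is `c j`, and stands in row `σ j`. -/
def monomialMatrix [Zero R] (σ : Equiv.Perm ι) (c : ι → R) : Matrix ι ι R :=
  Matrix.of fun i j => if i = σ j then c j else 0

theorem eq_monomialMatrix_of_forall_ne [Zero R] {σ : Equiv.Perm ι} {g : Matrix ι ι R}
    (hg : ∀ i j, i ≠ σ j → g i j = 0) : g = monomialMatrix σ fun j => g (σ j) j := by
  ext i j
  rcases eq_or_ne i (σ j) with rfl | hij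
  · simp [monomialMatrix]
  · simp [monomialMatrix, hij, hg i j hij]

theorem monomialMatrix_one [Zero R] (c : ι → R) : monomialMatrix 1 c = Matrix.diagonal c := by
  ext i j
  rcases eq_or_ne i j with rfl | hij
  · simp [monomialMatrix]
  · simp [monomialMatrix, hij]

variable [Fintype ι]

theorem monomialMatrix_mul [NonUnitalNonAssocSemiring R] (σ τ : Equiv.Perm ι) (c d : ι → R) :
    monomialMatrix σ c * monomialMatrix τ d = monomialMatrix (σ * τ) fun j => c (τ j) * d j := by
  ext i j
  simp only [monomialMatrix, Matrix.mul_apply, Matrix.of_apply, mul_ite, mul_zero,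
    Finset.sum_ite_eq', Finset.mem_univ, if_true, ite_mul, zero_mul]
  rfl

theorem monomialMatrix_pow [CommSemiring R] (σ : Equiv.Perm ι) (c : ι → R) (n : ℕ) :
    monomialMatrix σ c ^ n =
      monomialMatrix (σ ^ n) fun j => ∏ i ∈ Finset.range n, c ((σ ^ i) j) := by
  induction n with
  | zero => simp [monomialMatrix_one]
  | succ n ih =>
    simp only [pow_succ', ih, monomialMatrix_mul, Finset.prod_range_succ, mul_comm (c _)]

variable [CommRing R]

theorem det_monomialMatrix (σ : Equiv.Perm ι) (c : ι → R) :
    (monomialMatrix σ c).det = Equiv.Perm.sign σ * ∏ j, c j := by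
  have hσ : monomialMatrix σ c = (Matrix.diagonal c).submatrix ⇑σ⁻¹ id := by
    ext i j
    rcases eq_or_ne i (σ j) with rfl | hij
    · simp [monomialMatrix]
    · simp [monomialMatrix, hij, Equiv.symm_apply_eq]
  rw [hσ, Matrix.det_permute, Matrix.det_diagonal, Equiv.Perm.sign_inv]

theorem inv_transpose_monomialMatrix (σ : Equiv.Perm ι) (u : ι → Rˣ) :
    (monomialMatrix σ fun j => (u j : R)).transpose⁻¹ =
      monomialMatrix σ fun j => (((u j)⁻¹ : Rˣ) : R) := by
  refine Matrix.inv_eq_right_inv ?_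
  ext i j
  rcases eq_or_ne i j with rfl | hij
  · simp [monomialMatrix, Matrix.mul_apply]
  · simp [monomialMatrix, Matrix.mul_apply, hij, hij.symm]

end MonomialMatrix

section Cycle

variable {α : Type*} {σ : Equiv.Perm α} {s : Finset α} {x : α}

theorem exists_finset_pow_apply_mem_iff_odd (hσ : σ.IsCycleOn s) (hs : Even s.card)
    (hx : x ∈ s) :
    ∃ S : Finset α, S.card = s.card / 2 ∧ ∀ n : ℕ, (σ ^ n) x ∈ S ↔ Odd n := by
  classical
  refine ⟨(Finset.range (s.card / 2)).image fun i => (σ ^ (2 * i + 1)) x, ?_, fun n => ?_⟩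
  · rw [Finset.card_image_of_injOn, Finset.card_range]
    intro i hi j hj hij
    simp only [Finset.coe_range, Set.mem_Iio] at hi hj
    have hmod := (hσ.pow_apply_eq_pow_apply hx).1 hij
    have := hmod.eq_of_lt_of_lt (by omega) (by omega)
    omega
  · simp only [Finset.mem_image, Finset.mem_range, hσ.pow_apply_eq_pow_apply hx]
    constructor
    · rintro ⟨i, -, hi⟩
      have hparity : 2 * i + 1 ≡ n [MOD 2] := hi.of_dvd hs.two_dvd
      rw [Nat.odd_iff, ← hparity]
      omega
    · intro hn
      have hlt : n % s.card < s.card := Nat.mod_lt _ (Finset.card_pos.2 ⟨x, hx⟩)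
      obtain ⟨i, hi⟩ : Odd (n % s.card) := by
        rwa [Nat.odd_iff, Nat.mod_mod_of_dvd _ hs.two_dvd, ← Nat.odd_iff]
      exact ⟨i, by omega, hi ▸ Nat.mod_modEq n s.card⟩

theorem pow_card_eq_one_of_isCycleOn_univ [Fintype α] (hσ : σ.IsCycleOn Set.univ) :
    σ ^ Fintype.card α = 1 := by
  rw [← Finset.coe_univ] at hσ
  exact Equiv.ext fun x => hσ.pow_card_apply (Finset.mem_univ x)

theorem sign_of_isCycleOn_univ [Fintype α] [DecidableEq α] [Nontrivial α]
    (hσ : σ.IsCycleOn Set.univ) : Equiv.Perm.sign σ = -(-1) ^ Fintype.card α := by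
  have hsupport : σ.support = Finset.univ := by
    ext x
    simpa using hσ.apply_ne Set.nontrivial_univ (Set.mem_univ x)
  have hcycle : σ.IsCycle := Equiv.Perm.isCycle_iff_exists_isCycleOn.2
    ⟨Set.univ, Set.nontrivial_univ, hσ, fun _ _ => Set.mem_univ _⟩
  rw [hcycle.sign, hsupport, Finset.card_univ]

end Cycle

section AlternatingProd

variable {α G : Type*} [CommGroup G] {σ : Equiv.Perm α} {m : ℕ} {x : α}

/-- The alternating product `∏ u (σ ^ (2i+1) x) / u (σ ^ (2i) x)` of the first `2 * m` values
of `u` along the orbit of `x` under `σ`. These are the diagonal entries of `(g * γ(g)) ^ m`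
when `g` is monomial over `σ` with nonzero entries `u`. -/
def orbitAlternatingProd (σ : Equiv.Perm α) (u : α → G) (m : ℕ) (x : α) : G :=
  ∏ i ∈ Finset.range m, u ((σ ^ (2 * i + 1)) x) / u ((σ ^ (2 * i)) x)

theorem orbitAlternatingProd_perm_apply (u : α → G) (hx : (σ ^ (2 * m)) x = x) :
    orbitAlternatingProd σ u m (σ x) = (orbitAlternatingProd σ u m x)⁻¹ := by
  refine eq_inv_of_mul_eq_one_left ?_
  calc orbitAlternatingProd σ u m (σ x) * orbitAlternatingProd σ u m x
    _ = ∏ i ∈ Finset.range m, u ((σ ^ (2 * (i + 1))) x) / u ((σ ^ (2 * i)) x) := by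
      simp only [orbitAlternatingProd, ← Finset.prod_mul_distrib, ← Equiv.Perm.mul_apply,
        ← pow_succ, div_mul_div_cancel, mul_add, mul_one, add_assoc, Nat.reduceAdd]
    _ = u ((σ ^ (2 * m)) x) / u x := Finset.prod_range_div (fun i => u ((σ ^ (2 * i)) x)) m
    _ = 1 := by rw [hx, div_self']

theorem orbitAlternatingProd_pow_apply (u : α → G) (hx : (σ ^ (2 * m)) x = x) (n : ℕ) :
    orbitAlternatingProd σ u m ((σ ^ n) x) =
      if Odd n then (orbitAlternatingProd σ u m x)⁻¹ else orbitAlternatingProd σ u m x := by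
  induction n with
  | zero => simp
  | succ n ih =>
    have hn : (σ ^ (2 * m)) ((σ ^ n) x) = (σ ^ n) x := by
      rw [← Equiv.Perm.mul_apply, pow_mul_comm, Equiv.Perm.mul_apply, hx]
    rw [pow_succ', Equiv.Perm.mul_apply, orbitAlternatingProd_perm_apply u hn, ih]
    by_cases h : Odd n <;> simp [h, Nat.odd_add_one]

theorem orbitAlternatingProd_mulSingle [DecidableEq α] {s : Finset α} (hσ : σ.IsCycleOn s)
    (hs : s.card = 2 * m) (hx : x ∈ s) (b : G) :
    orbitAlternatingProd σ (Pi.mulSingle x b) m x = b⁻¹ := by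
  have hm : 0 < m := by
    have := Finset.card_pos.2 ⟨x, hx⟩
    omega
  have hpow (n : ℕ) : (σ ^ n) x = x ↔ 2 * m ∣ n := hs ▸ hσ.pow_apply_eq hx
  have hodd : ∏ i ∈ Finset.range m, (Pi.mulSingle x b : α → G) ((σ ^ (2 * i + 1)) x) = 1 := by
    refine Finset.prod_eq_one fun i _ => Pi.mulSingle_eq_of_ne (M := fun _ => G) (fun h => ?_) b
    have := (Dvd.intro m rfl).trans ((hpow _).1 h)
    omega
  have heven : ∏ i ∈ Finset.range m, (Pi.mulSingle x b : α → G) ((σ ^ (2 * i)) x) = b := by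
    rw [Finset.prod_eq_single_of_mem 0 (Finset.mem_range.2 hm)]
    · exact Pi.mulSingle_eq_same (M := fun _ => G) x b
    · intro i hi hi0
      refine Pi.mulSingle_eq_of_ne (M := fun _ => G) (fun h => ?_) b
      have := Nat.le_of_dvd (by omega) ((hpow _).1 h)
      have := Finset.mem_range.1 hi
      omega
  rw [orbitAlternatingProd, Finset.prod_div_distrib, hodd, heven, one_div]

end AlternatingProd

section MonomialCycle

variable {ι R : Type*} [Fintype ι] [DecidableEq ι] [CommRing R] {σ : Equiv.Perm ι}

theorem monomialMatrix_mul_inv_transpose_pow (σ : Equiv.Perm ι) (u : ι → Rˣ) (m : ℕ) :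
    ((monomialMatrix σ fun j => (u j : R)) *
        (monomialMatrix σ fun j => (u j : R)).transpose⁻¹) ^ m =
      monomialMatrix (σ ^ (2 * m)) fun j => ((orbitAlternatingProd σ u m j : Rˣ) : R) := by
  simp only [inv_transpose_monomialMatrix, monomialMatrix_mul, monomialMatrix_pow,
    orbitAlternatingProd, div_eq_mul_inv, Units.coe_prod, Units.val_mul, ← pow_two, ← pow_mul,
    pow_succ' σ (2 * _), Equiv.Perm.mul_apply]

theorem det_monomialMatrix_mulSingle_of_even (hσ : σ.IsCycleOn Set.univ)
    (heven : Even (Fintype.card ι)) (j : ι) (b : R) :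
    (monomialMatrix σ (Pi.mulSingle j b)).det = -b := by
  have hnontrivial : Nontrivial ι := by
    have := Fintype.card_pos_iff.2 ⟨j⟩
    rw [← Fintype.one_lt_card_iff_nontrivial]
    grind
  rw [det_monomialMatrix, sign_of_isCycleOn_univ hσ, heven.neg_one_pow]
  simp

theorem exists_monomialMatrix_mulSingle_pow_eq_diagonal (hσ : σ.IsCycleOn Set.univ)
    (heven : Even (Fintype.card ι)) (j₀ : ι) (b : Rˣ) :
    ∃ S : Finset ι, S.card = Fintype.card ι / 2 ∧
      (monomialMatrix σ (Pi.mulSingle j₀ (b : R)) *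
          (monomialMatrix σ (Pi.mulSingle j₀ (b : R))).transpose⁻¹) ^ (Fintype.card ι / 2) =
        Matrix.diagonal fun i => if i ∈ S then (b : R) else (b⁻¹ : Rˣ) := by
  have hσ' : σ.IsCycleOn (Finset.univ : Finset ι) := by rwa [Finset.coe_univ]
  have hcard : 2 * (Fintype.card ι / 2) = Fintype.card ι := Nat.two_mul_div_two_of_even heven
  have hperiod : σ ^ (2 * (Fintype.card ι / 2)) = 1 := by
    rw [hcard, pow_card_eq_one_of_isCycleOn_univ hσ]
  obtain ⟨S, hScard, hS⟩ := exists_finset_pow_apply_mem_iff_odd hσ' heven (Finset.mem_univ j₀)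
  refine ⟨S, hScard, ?_⟩
  have hcoe : (Pi.mulSingle j₀ (b : R) : ι → R) =
      fun j => ((Pi.mulSingle j₀ b : ι → Rˣ) j : R) := by
    ext j
    exact (Pi.apply_mulSingle (fun _ => Units.val) (fun _ => Units.val_one) j₀ b j).symm
  rw [hcoe, monomialMatrix_mul_inv_transpose_pow, hperiod, monomialMatrix_one]
  congr 1 with j
  obtain ⟨n, -, rfl⟩ := hσ'.exists_pow_eq (Finset.mem_univ j₀) (Finset.mem_univ j)
  rw [orbitAlternatingProd_pow_apply _ (by rw [hperiod, Equiv.Perm.one_apply]),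
    orbitAlternatingProd_mulSingle hσ' hcard.symm (Finset.mem_univ j₀), inv_inv]
  simp only [hS, apply_ite Units.val]

end MonomialCycle

theorem stmt9_general {R ι : Type*} [CommRing R] [Fintype ι] [DecidableEq ι]
    (heven : Even (Fintype.card ι)) (g : Matrix ι ι R) (hunit : IsUnit g.det)
    (σ : Equiv.Perm ι) (hmono : ∀ i j, i ≠ σ j → g i j = 0)
    (hcycle : σ.IsCycleOn Set.univ) (j₀ : ι) (hone : ∀ j, j ≠ j₀ → g (σ j) j = 1) :
    g (σ j₀) j₀ = -g.det ∧
    ∃ S : Finset ι, S.card = Fintype.card ι / 2 ∧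
      (g * g.transpose⁻¹) ^ (Fintype.card ι / 2) =
        Matrix.diagonal fun i => if i ∈ S then -g.det else -Ring.inverse g.det := by
  have hentries : (fun j => g (σ j) j) = Pi.mulSingle j₀ (g (σ j₀) j₀) := by
    ext j
    rcases eq_or_ne j j₀ with rfl | hj
    · rw [Pi.mulSingle_eq_same]
    · rw [hone j hj, Pi.mulSingle_eq_of_ne hj]
  have hg : g = monomialMatrix σ (Pi.mulSingle j₀ (g (σ j₀) j₀)) :=
    hentries ▸ eq_monomialMatrix_of_forall_ne hmono
  have hdet : g.det = -g (σ j₀) j₀ := by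
    conv_lhs => rw [hg]
    exact det_monomialMatrix_mulSingle_of_even hcycle heven j₀ _
  obtain ⟨d, hd⟩ := hunit
  have hentry : g (σ j₀) j₀ = (-d : Rˣ) := by rw [Units.val_neg, hd, hdet, neg_neg]
  refine ⟨by rw [hdet, neg_neg], ?_⟩
  obtain ⟨S, hScard, hS⟩ := exists_monomialMatrix_mulSingle_pow_eq_diagonal hcycle heven j₀ (-d)
  rw [← hentry, ← hg] at hS
  refine ⟨S, hScard, hS.trans ?_⟩
  simp only [hentry, ← hd, Ring.inverse_unit, inv_neg, Units.val_neg]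

/-- let `l` be even and `g ∈ GL(l,k)` a monomial matrix whose
underlying permutation `σ` is an `l`-cycle and all but one of whose nonzero
entries equal `1`.  Then the remaining entry is `-det g`, and with
`γ(g) = (ᵀg)⁻¹`, the matrix `(g·γ(g))^{l/2}` is diagonal with exactly `l/2`
entries equal to `-det g` and exactly `l/2` entries equal to `-(det g)⁻¹`. -/
theorem stmt9 {k : Type*} [Field k] (l : ℕ) (hl : 0 < l) (hleven : Even l)
    (g : Matrix (Fin l) (Fin l) k) (hunit : IsUnit g.det)
    (σ : Equiv.Perm (Fin l))
    (hmono : ∀ i j, i ≠ σ j → g i j = 0)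
    (hnz : ∀ j, g (σ j) j ≠ 0)
    (hcycle : ∀ i j : Fin l, ∃ a : ℕ, (σ ^ a) i = j)
    (j₀ : Fin l) (hone : ∀ j, j ≠ j₀ → g (σ j) j = 1) :
    g (σ j₀) j₀ = -g.det ∧
    ∃ S : Finset (Fin l), S.card = l / 2 ∧
      (g * (g.transpose)⁻¹) ^ (l / 2) =
        Matrix.diagonal (fun i => if i ∈ S then -g.det else -(g.det)⁻¹) := by
  have hσ : σ.IsCycleOn Set.univ :=
    ⟨Set.bijOn_univ.2 σ.bijective, fun i _ j _ => (hcycle i j).imp' Nat.cast fun a ha => by simpa⟩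
  simpa [Ring.inverse_eq_inv] using stmt9_general (by simpa) g hunit σ hmono hσ j₀ hone
end
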